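/- (Nesterenko's linear independence criterion.) Let r ≥ 1, let ξ = (ξ_0, …, ξ_r) ∈ ℝ^{r+1} with dim_ℚ Span_ℚ(ξ_0, …, ξ_r) ≥ 2, and let τ > 0. Assume there exists a sequence (L_n) of linear forms L = ℓ_0 X_0 + ⋯ + ℓ_r X_r with integer coefficients such that L_n(ξ) ≠ 0 for all n, L_n(ξ) → 0, |L_{n+1}(ξ)| = |L_n(ξ)|^{1+o(1)}, and |L_n(ξ)| ≤ H(L_n)^{−τ+o(1)}. Then dim_ℚ Span_ℚ(ξ_0, …, ξ_r) ≥ τ + 1. -/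

import Mathlib

/-!
Let `d = s + 1` be the dimension of the rational span of `ξ`, and suppose `τ > s`. Dirichlet's
simultaneous approximation theorem, applied to a basis of the span
(`exists_integer_points_near_line`), gives integer points `x` with `x = t ξ + O(|t| ^ (-1/s))` for
arbitrarily large `|t|`; that `|t|` is unbounded is where `d ≥ 2` enters.

Given such an `x`, take the first index `m` with `|t| |L_m(ξ)| < 1/2`. By the hypothesis on
consecutive values, `|L_m(ξ)| = |t| ^ (-1 + o(1))` (`exists_first_passage`), so
`H(L_m) ≤ |t| ^ (1/τ + o(1))` and `L_m(x) = t L_m(ξ) + O(|t| ^ (1/τ - 1/s + o(1)))`. As `τ > s`,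
the error tends to `0`, so the integer `L_m(x)` has absolute value less than `1` and is `0`.
But then `|t| ^ (-o(1)) ≤ |t| |L_m(ξ)| ≤ O(|t| ^ (1/τ - 1/s + o(1)))`, which fails for large `|t|`
(`eval_le_error`).
-/

open Filter Topology

/-- The height `H(L) = max_i |ℓ_i|` of an integer linear form `L = ℓ_0 X_0 + ⋯`. -/
def heightLF {n : ℕ} (L : Fin n → ℤ) : ℝ :=
  ((Finset.univ.sup fun i => (L i).natAbs : ℕ) : ℝ)

/-- The value `L(ξ) = ℓ_0 ξ_0 + ⋯ + ℓ_r ξ_r` of an integer linear form at `ξ`. -/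
def evalLF {n : ℕ} (L : Fin n → ℤ) (ξ : Fin n → ℝ) : ℝ :=
  ∑ i, (L i : ℝ) * ξ i

/-! ### Simultaneous approximation -/

/-- Dirichlet's simultaneous approximation theorem: pigeonhole on the fractional parts of
`k θ_i`, `0 ≤ k ≤ N ^ s`, sorted into `N ^ s` boxes of side `1 / N`. -/
lemma dirichlet_simultaneous {s : ℕ} (θ : Fin s → ℝ) {N : ℕ} (hN : 0 < N) :
    ∃ q : ℕ, 0 < q ∧ q ≤ N ^ s ∧ ∃ p : Fin s → ℤ, ∀ i, |q * θ i - p i| < 1 / N := by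
  have hN' : (0 : ℝ) < N := by exact_mod_cast hN
  have hlt : ∀ (k : ℕ) (i : Fin s), ⌊(N : ℝ) * Int.fract (k * θ i)⌋₊ < N := by
    intro k i
    rw [Nat.floor_lt (by positivity)]
    nlinarith [Int.fract_lt_one (k * θ i)]
  let f : ℕ → (Fin s → Fin N) := fun k i => ⟨⌊(N : ℝ) * Int.fract (k * θ i)⌋₊, hlt k i⟩
  obtain ⟨a, ha, b, hb, hab, hfab⟩ :=
    Finset.exists_ne_map_eq_of_card_lt_of_maps_to (s := Finset.range (N ^ s + 1))
      (t := (Finset.univ : Finset (Fin s → Fin N))) (f := f) (by simp) (by intro x _; simp)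
  wlog hlt' : a < b generalizing a b
  · exact this b hb a ha hab.symm hfab.symm (by omega)
  simp only [Finset.mem_range] at ha hb
  refine ⟨b - a, by omega, by omega, fun i => ⌊b * θ i⌋ - ⌊a * θ i⌋, fun i => ?_⟩
  have h1 : ⌊(N : ℝ) * Int.fract (a * θ i)⌋₊ = ⌊(N : ℝ) * Int.fract (b * θ i)⌋₊ :=
    congrArg Fin.val (congrFun hfab i)
  have ea := Nat.floor_le (show 0 ≤ (N : ℝ) * Int.fract (a * θ i) by positivity)
  have ea' := Nat.lt_floor_add_one ((N : ℝ) * Int.fract (a * θ i))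
  have eb := Nat.floor_le (show 0 ≤ (N : ℝ) * Int.fract (b * θ i) by positivity)
  have eb' := Nat.lt_floor_add_one ((N : ℝ) * Int.fract (b * θ i))
  rw [h1] at ea ea'
  have e : ((b - a : ℕ) : ℝ) * θ i - ((⌊b * θ i⌋ - ⌊a * θ i⌋ : ℤ) : ℝ)
      = Int.fract (b * θ i) - Int.fract (a * θ i) := by
    rw [Nat.cast_sub hlt'.le, Int.fract, Int.fract]; push_cast; ring
  rw [e, abs_lt, ← neg_div, div_lt_iff₀ hN', lt_div_iff₀ hN']
  constructor <;> nlinarith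

/-- The denominator in Dirichlet's theorem can be taken arbitrarily large as soon as one of the
numbers is irrational, because each fixed `q` keeps `q θ_i` away from `ℤ`. -/
lemma dirichlet_large {s : ℕ} (θ : Fin s → ℝ) (i₀ : Fin s) (hi₀ : Irrational (θ i₀)) (B : ℕ) :
    ∃ q : ℕ, B ≤ q ∧ 0 < q ∧
      ∃ p : Fin s → ℤ, ∀ i, |q * θ i - p i| ≤ (q : ℝ) ^ (-(1 / (s : ℝ))) := by
  have hs : 0 < s := i₀.pos
  have hev : ∀ᶠ N : ℕ in atTop, ∀ q ∈ Finset.range B, 0 < q →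
      ∀ p : ℤ, 1 / (N : ℝ) ≤ |q * θ i₀ - p| := by
    rw [Filter.eventually_all_finset]
    intro q _
    rcases Nat.eq_zero_or_pos q with rfl | hq
    · simp
    have hpos : 0 < |q * θ i₀ - round (q * θ i₀)| := by
      rw [abs_pos, sub_ne_zero]
      exact (hi₀.natCast_mul hq.ne').ne_int _
    filter_upwards [tendsto_one_div_atTop_nhds_zero_nat.eventually_lt_const hpos] with N hN _ p
    exact hN.le.trans (round_le _ _)
  obtain ⟨N, hN, hN0⟩ := (hev.and (eventually_gt_atTop 0)).exists
  obtain ⟨q, hq, hqN, p, hp⟩ := dirichlet_simultaneous θ hN0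
  refine ⟨q, ?_, hq, p, fun i => (hp i).le.trans ?_⟩
  · by_contra hqB
    exact absurd (hp i₀) (not_lt.mpr (hN q (by simpa using hqB) hq (p i₀)))
  · have hq' : (0 : ℝ) < q := by exact_mod_cast hq
    have hN' : (0 : ℝ) < N := by exact_mod_cast hN0
    rw [Real.rpow_neg hq'.le, one_div]
    refine inv_anti₀ (by positivity) ?_
    calc (q : ℝ) ^ (1 / (s : ℝ)) ≤ ((N : ℝ) ^ s) ^ (1 / (s : ℝ)) :=
          Real.rpow_le_rpow hq'.le (by exact_mod_cast hqN) (by positivity)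
      _ = N := by rw [one_div, Real.pow_rpow_inv_natCast hN'.le (Nat.pos_iff_ne_zero.mp hs)]

/-! ### Integer points near a line -/

/-- A finite family of reals consists of integer combinations of a `ℚ`-linearly independent
family with as many members as the dimension of its span: clear denominators in a basis. -/
lemma exists_integral_coordinates {r : ℕ} (ξ : Fin r → ℝ) {d : ℕ}
    (hd : Module.finrank ℚ ↥(Submodule.span ℚ (Set.range ξ)) = d) :
    ∃ η : Fin d → ℝ, LinearIndependent ℚ η ∧
      ∃ A : Fin r → Fin d → ℤ, ∀ j, ξ j = ∑ k, (A j k : ℝ) * η k := by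
  have : FiniteDimensional ℚ ↥(Submodule.span ℚ (Set.range ξ)) :=
    FiniteDimensional.span_of_finite ℚ (Set.finite_range ξ)
  let b := Module.finBasisOfFinrankEq ℚ ↥(Submodule.span ℚ (Set.range ξ)) hd
  let c : Fin r → Fin d → ℚ := fun j => b.repr ⟨ξ j, Submodule.subset_span ⟨j, rfl⟩⟩
  have hc : ∀ j, ξ j = ∑ k, (c j k : ℝ) * (b k : ℝ) := by
    intro j
    have := congrArg Subtype.val (b.sum_repr ⟨ξ j, Submodule.subset_span ⟨j, rfl⟩⟩)
    simp only [Submodule.coe_sum, Submodule.coe_smul, Rat.smul_def] at this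
    exact this.symm
  obtain ⟨D, hD⟩ := IsLocalization.exist_integer_multiples_of_finite (nonZeroDivisors ℤ)
    (fun jk : Fin r × Fin d => c jk.1 jk.2)
  choose A hA using hD
  have hD0 : ((D : ℤ) : ℚ) ≠ 0 := by exact_mod_cast nonZeroDivisors.ne_zero D.2
  have hli : LinearIndependent ℚ (fun k => (b k : ℝ)) :=
    b.linearIndependent.map' (Submodule.subtype _) (Submodule.ker_subtype _)
  refine ⟨fun k => (((D : ℤ) : ℚ)⁻¹) • (b k : ℝ), ?_, fun j k => A (j, k), fun j => ?_⟩
  · exact hli.units_smul (fun _ => (Units.mk0 _ hD0)⁻¹)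
  · rw [hc j]
    refine Finset.sum_congr rfl fun k _ => ?_
    have h := hA (j, k)
    simp only [algebraMap_int_eq, eq_intCast, zsmul_eq_mul] at h
    have h' : (A (j, k) : ℝ) = ((D : ℤ) : ℝ) * (c j k : ℝ) := by exact_mod_cast h
    have hD1 : ((D : ℤ) : ℝ) ≠ 0 := by exact_mod_cast hD0
    simp only [h', Rat.smul_def]
    push_cast
    field_simp

/-- Integer points close to the line `ℝ ξ`, as far out as desired, with the exponent
`1 / (d - 1)` where `d = s + 1` is the dimension of the rational span. -/
lemma exists_integer_points_near_line {r s : ℕ} (ξ : Fin r → ℝ) (hs : 0 < s)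
    (hd : Module.finrank ℚ ↥(Submodule.span ℚ (Set.range ξ)) = s + 1) :
    ∃ K : ℝ, 0 < K ∧ ∀ B : ℝ, ∃ t : ℝ, B ≤ |t| ∧ ∃ x : Fin r → ℤ,
      ∀ j, |x j - t * ξ j| ≤ K * |t| ^ (-(1 / (s : ℝ))) := by
  obtain ⟨η, hη, A, hA⟩ := exists_integral_coordinates ξ hd
  have h0 : η 0 ≠ 0 := hη.ne_zero 0
  have h0' : 0 < |η 0| := abs_pos.mpr h0
  let i₀ : Fin s := ⟨0, hs⟩
  have hirr : Irrational (η i₀.succ / η 0) := by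
    rintro ⟨q, hq⟩
    have h2 : LinearIndependent ℚ ![η 0, η i₀.succ] := by
      have := hη.comp ![0, i₀.succ] (by
        intro a b
        fin_cases a <;> fin_cases b <;> simp [Fin.succ_ne_zero, (Fin.succ_ne_zero _).symm])
      convert this using 1
      ext a; fin_cases a <;> rfl
    rw [LinearIndependent.pair_iff] at h2
    have := (h2 q (-1) (by
      rw [Rat.smul_def, Rat.smul_def, hq]; push_cast; field_simp; ring)).2
    norm_num at this
  have hbig := dirichlet_large (fun i : Fin s => η i.succ / η 0) i₀ hirr
  set M : ℝ := ∑ j, ∑ k, |(A j k : ℝ)| with hM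
  have hM0 : 0 ≤ M := by positivity
  refine ⟨(M + 1) * |η 0| ^ (-(1 / (s : ℝ))), by positivity, fun B => ?_⟩
  obtain ⟨q, hqB, hq, p, hp⟩ := hbig ⌈B * |η 0|⌉₊
  have hq' : (0 : ℝ) < q := by exact_mod_cast hq
  have hE : (0 : ℝ) ≤ (q : ℝ) ^ (-(1 / (s : ℝ))) := by positivity
  have htabs : |(q : ℝ) / η 0| = q / |η 0| := by rw [abs_div, abs_of_pos hq']
  let P : Fin (s + 1) → ℤ := Fin.cons (q : ℤ) p
  have hP : ∀ k, |(P k : ℝ) - q / η 0 * η k| ≤ (q : ℝ) ^ (-(1 / (s : ℝ))) := by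
    intro k
    refine Fin.cases ?_ (fun i => ?_) k
    · simp only [P, Fin.cons_zero, Int.cast_natCast, div_mul_cancel₀ _ h0, sub_self, abs_zero]
      exact hE
    · simp only [P, Fin.cons_succ]
      rw [abs_sub_comm]
      convert hp i using 2
      ring
  refine ⟨q / η 0, ?_, fun j => ∑ k, A j k * P k, fun j => ?_⟩
  · rw [htabs, le_div_iff₀ h0']
    exact (Nat.le_ceil _).trans (by exact_mod_cast hqB)
  · have e : ((∑ k, A j k * P k : ℤ) : ℝ) - q / η 0 * ξ j
        = ∑ k, (A j k : ℝ) * (P k - q / η 0 * η k) := by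
      rw [hA j, Finset.mul_sum]; push_cast; rw [← Finset.sum_sub_distrib]
      exact Finset.sum_congr rfl fun k _ => by ring
    have eR : (M + 1) * |η 0| ^ (-(1 / (s : ℝ))) * |(q : ℝ) / η 0| ^ (-(1 / (s : ℝ)))
        = (M + 1) * (q : ℝ) ^ (-(1 / (s : ℝ))) := by
      rw [mul_assoc, htabs, ← Real.mul_rpow h0'.le (by positivity), mul_div_cancel₀ _ h0'.ne']
    rw [e, eR]
    calc |∑ k, (A j k : ℝ) * (P k - q / η 0 * η k)|
        ≤ ∑ k, |(A j k : ℝ)| * (q : ℝ) ^ (-(1 / (s : ℝ))) := by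
          refine (Finset.abs_sum_le_sum_abs _ _).trans (Finset.sum_le_sum fun k _ => ?_)
          rw [abs_mul]
          exact mul_le_mul_of_nonneg_left (hP k) (abs_nonneg _)
      _ = (∑ k, |(A j k : ℝ)|) * (q : ℝ) ^ (-(1 / (s : ℝ))) := by rw [Finset.sum_mul]
      _ ≤ (M + 1) * (q : ℝ) ^ (-(1 / (s : ℝ))) := by
          refine mul_le_mul_of_nonneg_right ?_ hE
          have := Finset.single_le_sum (f := fun j => ∑ k, |(A j k : ℝ)|)
            (fun j _ => by positivity) (Finset.mem_univ j)
          linarith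

/-! ### Values of integer linear forms -/

lemma abs_coeff_le_height {n : ℕ} (L : Fin n → ℤ) (i : Fin n) : |(L i : ℝ)| ≤ heightLF L := by
  have h : (L i).natAbs ≤ Finset.univ.sup fun i => (L i).natAbs :=
    Finset.le_sup (f := fun i => (L i).natAbs) (Finset.mem_univ i)
  rw [heightLF, ← Int.cast_abs, Int.abs_eq_natAbs]
  exact_mod_cast h

lemma one_le_height {n : ℕ} {L : Fin n → ℤ} {ξ : Fin n → ℝ} (h : evalLF L ξ ≠ 0) :
    1 ≤ heightLF L := by
  obtain ⟨i, -, hi⟩ := Finset.exists_ne_zero_of_sum_ne_zero h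
  have hLi : L i ≠ 0 := fun h0 => hi (by simp [h0])
  refine le_trans ?_ (abs_coeff_le_height L i)
  exact_mod_cast Int.one_le_abs hLi

/-- If `L` is small at `t ξ`, it cannot also be larger there than the error made on replacing
`t ξ` by a nearby integer point `x`: the integer `L(x)` would have absolute value below `1`,
hence vanish, and `L(t ξ)` would be equal to that error. -/
lemma eval_le_error {n : ℕ} (L : Fin n → ℤ) (ξ : Fin n → ℝ) (x : Fin n → ℤ) (t ε : ℝ)
    (hx : ∀ j, |x j - t * ξ j| ≤ ε) (h1 : |t| * |evalLF L ξ| < 1 / 2)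
    (h2 : heightLF L * (n * ε) < 1 / 2) :
    |t| * |evalLF L ξ| ≤ heightLF L * (n * ε) := by
  have herr : |((∑ j, L j * x j : ℤ) : ℝ) - t * evalLF L ξ| ≤ heightLF L * (n * ε) := by
    have e : ((∑ j, L j * x j : ℤ) : ℝ) - t * evalLF L ξ
        = ∑ j, (L j : ℝ) * (x j - t * ξ j) := by
      rw [evalLF, Finset.mul_sum]; push_cast; rw [← Finset.sum_sub_distrib]
      exact Finset.sum_congr rfl fun k _ => by ring
    rw [e]
    calc _ ≤ ∑ _j : Fin n, heightLF L * ε := by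
          refine (Finset.abs_sum_le_sum_abs _ _).trans (Finset.sum_le_sum fun j _ => ?_)
          rw [abs_mul]
          exact mul_le_mul (abs_coeff_le_height L j) (hx j) (abs_nonneg _)
            ((abs_nonneg _).trans (abs_coeff_le_height L j))
      _ = _ := by simp; ring
  rw [← abs_mul] at h1 ⊢
  have hz : (∑ j, L j * x j : ℤ) = 0 := by
    rw [← Int.abs_lt_one_iff]
    have : |((∑ j, L j * x j : ℤ) : ℝ)| < 1 := by
      have := abs_add_le (((∑ j, L j * x j : ℤ) : ℝ) - t * evalLF L ξ) (t * evalLF L ξ)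
      rw [sub_add_cancel] at this
      linarith
    exact_mod_cast this
  rw [hz, Int.cast_zero, zero_sub, abs_neg] at herr
  exact herr

/-! ### The criterion -/

/-- Where a sequence tending to infinity with ratios at most `1 + κ` first passes a large level
`T`, it does not exceed `(1 + κ) T`. -/
lemma exists_first_passage {a : ℕ → ℝ} {κ : ℝ} (hκ : 0 < κ) (ha : Tendsto a atTop atTop)
    {n₀ : ℕ} (hr : ∀ n ≥ n₀, a (n + 1) ≤ (1 + κ) * a n) {T : ℝ} (hT : a n₀ ≤ T) :
    ∃ m ≥ n₀, T < a m ∧ a m ≤ (1 + κ) * T := by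
  classical
  have hex : ∃ k, T < a (n₀ + k) := by
    obtain ⟨m, hm, hm'⟩ := ((ha.eventually_gt_atTop T).and (eventually_ge_atTop n₀)).exists
    exact ⟨m - n₀, by rwa [Nat.add_sub_cancel' hm']⟩
  have hk := Nat.find_spec hex
  have hk0 : Nat.find hex ≠ 0 := fun h => by
    rw [h, add_zero] at hk; linarith
  obtain ⟨k, hk'⟩ := Nat.exists_eq_succ_of_ne_zero hk0
  have hmin : a (n₀ + k) ≤ T := not_lt.mp (Nat.find_min hex (by omega))
  refine ⟨n₀ + Nat.find hex, by omega, hk, ?_⟩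
  rw [hk']
  have := hr (n₀ + k) (by omega)
  calc a (n₀ + k + 1) ≤ (1 + κ) * a (n₀ + k) := this
    _ ≤ _ := mul_le_mul_of_nonneg_left hmin (by linarith)

/-- Nesterenko's linear independence criterion. -/
theorem nesterenko_criterion (r : ℕ) (hr : 1 ≤ r) (ξ : Fin (r + 1) → ℝ)
    (hdim : 2 ≤ Module.finrank ℚ ↥(Submodule.span ℚ (Set.range ξ)))
    (τ : ℝ) (hτ : 0 < τ) (L : ℕ → Fin (r + 1) → ℤ)
    (hne : ∀ n, evalLF (L n) ξ ≠ 0)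
    (hlim : Tendsto (fun n => evalLF (L n) ξ) atTop (𝓝 0))
    (hratio : ∃ δ : ℕ → ℝ, Tendsto δ atTop (𝓝 0) ∧ ∀ n,
      |evalLF (L (n + 1)) ξ| = |evalLF (L n) ξ| ^ (1 + δ n))
    (hsmall : ∃ δ : ℕ → ℝ, Tendsto δ atTop (𝓝 0) ∧ ∀ n,
      |evalLF (L n) ξ| ≤ heightLF (L n) ^ (-τ + δ n)) :
    τ + 1 ≤ (Module.finrank ℚ ↥(Submodule.span ℚ (Set.range ξ)) : ℝ) := by
  obtain ⟨s, hs⟩ : ∃ s, Module.finrank ℚ ↥(Submodule.span ℚ (Set.range ξ)) = s + 1 :=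
    ⟨_, (Nat.sub_add_cancel (by omega)).symm⟩
  have hs0 : 0 < s := by omega
  have hs0' : (0 : ℝ) < s := by exact_mod_cast hs0
  rw [hs]
  push_cast
  by_contra hcon
  have hsτ : (s : ℝ) < τ := by linarith
  obtain ⟨σ, hsσ, hστ⟩ := exists_between hsτ
  have hσ : 0 < σ := by linarith
  -- With `κ` this small, the error `|t| ^ (-1/s) * H(L)` stays below the main term `|t|^(-κ)`.
  obtain ⟨κ, hκ, hκσ⟩ : ∃ κ : ℝ, 0 < κ ∧ (1 + κ) / σ + κ < 1 / s := by
    have h : 0 < 1 / (s : ℝ) - 1 / σ := sub_pos.mpr (one_div_lt_one_div_of_lt hs0' hsσ)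
    have h' : 0 < 1 / σ + 1 := by positivity
    refine ⟨(1 / (s : ℝ) - 1 / σ) / (1 / σ + 1) / 2, by positivity, ?_⟩
    have e : (1 / (s : ℝ) - 1 / σ) / (1 / σ + 1) * (1 / σ + 1) = 1 / (s : ℝ) - 1 / σ :=
      div_mul_cancel₀ _ h'.ne'
    set w := (1 / (s : ℝ) - 1 / σ) / (1 / σ + 1)
    have e2 : (1 + w / 2) / σ = 1 / σ + w / 2 * (1 / σ) := by ring
    rw [e2]; nlinarith
  obtain ⟨δ, hδ, hδr⟩ := hratio
  obtain ⟨δ', hδ', hδs⟩ := hsmall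
  have hepos : ∀ n, 0 < |evalLF (L n) ξ| := fun n => abs_pos.mpr (hne n)
  set a : ℕ → ℝ := fun n => -Real.log |evalLF (L n) ξ| with ha_def
  have ha : Tendsto a atTop atTop := by
    refine tendsto_neg_atBot_atTop.comp (Real.tendsto_log_nhdsNE_zero.comp ?_)
    refine tendsto_nhdsWithin_iff.mpr ⟨?_, Eventually.of_forall fun n => (hepos n).ne'⟩
    simpa using hlim.abs
  have hstep : ∀ n, a (n + 1) = (1 + δ n) * a n := by
    intro n
    simp only [ha_def]
    rw [hδr n, Real.log_rpow (hepos n)]; ring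
  have hheight : ∀ n, (τ - δ' n) * Real.log (heightLF (L n)) ≤ a n := by
    intro n
    have hH : 0 < heightLF (L n) := one_pos.trans_le (one_le_height (hne n))
    have := Real.log_le_log (hepos n) (hδs n)
    rw [Real.log_rpow hH] at this
    simp only [ha_def]
    linarith
  obtain ⟨n₀, hn₀⟩ := eventually_atTop.mp ((ha.eventually_gt_atTop 0).and
    ((hδ.eventually_lt_const hκ).and (hδ'.eventually_lt_const (sub_pos.mpr hστ))))
  obtain ⟨K, hK, hpts⟩ := exists_integer_points_near_line ξ hs0 hs
  -- The exponent comparison, for all sufficiently large `u = |t|`.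
  have hbig : ∀ᶠ u : ℝ in atTop, 1 ≤ u ∧ a n₀ ≤ Real.log (2 * u) ∧
      (2 * u) ^ ((1 + κ) / σ) * ((r + 1 : ℕ) * (K * u ^ (-(1 / (s : ℝ)))))
        < 1 / 2 * (2 * u) ^ (-κ) := by
    have h2u : Tendsto (fun u : ℝ => 2 * u) atTop atTop :=
      tendsto_id.const_mul_atTop (by norm_num)
    have hz := (tendsto_rpow_neg_atTop (sub_pos.mpr hκσ)).comp h2u
    have hz' := hz.const_mul (((r + 1 : ℕ) : ℝ) * K * 2 ^ (1 / (s : ℝ)))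
    rw [mul_zero] at hz'
    filter_upwards [eventually_ge_atTop 1,
      (Real.tendsto_log_atTop.comp h2u).eventually_ge_atTop (a n₀),
      hz'.eventually_lt_const (show (0 : ℝ) < 1 / 2 by norm_num)] with u hu1 hu2 hu3
    refine ⟨hu1, hu2, ?_⟩
    have hu : 0 < u := by linarith
    have h2 : 0 < 2 * u := by linarith
    have e1 : u ^ (-(1 / (s : ℝ))) = 2 ^ (1 / (s : ℝ)) * (2 * u) ^ (-(1 / (s : ℝ))) := by
      rw [Real.mul_rpow (by norm_num) hu.le, ← mul_assoc, ← Real.rpow_add (by norm_num)]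
      simp
    have e2 : (2 * u) ^ ((1 + κ) / σ) * ((r + 1 : ℕ) * (K * u ^ (-(1 / (s : ℝ)))))
        = ((r + 1 : ℕ) : ℝ) * K * 2 ^ (1 / (s : ℝ)) *
          (2 * u) ^ (-(1 / (s : ℝ) - ((1 + κ) / σ + κ))) * (2 * u) ^ (-κ) := by
      have : (2 * u) ^ (-(1 / (s : ℝ) - ((1 + κ) / σ + κ))) * (2 * u) ^ (-κ)
          = (2 * u) ^ ((1 + κ) / σ) * (2 * u) ^ (-(1 / (s : ℝ))) := by
        rw [← Real.rpow_add h2, ← Real.rpow_add h2]; congr 1; ring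
      rw [mul_assoc _ ((2 * u) ^ (-(1 / (s : ℝ) - ((1 + κ) / σ + κ)))), this, e1]; ring
    rw [e2]
    exact mul_lt_mul_of_pos_right hu3 (by positivity)
  obtain ⟨B, hB⟩ := eventually_atTop.mp hbig
  obtain ⟨t, htB, x, hx⟩ := hpts B
  obtain ⟨ht1, htn, hterr⟩ := hB _ htB
  have ht0 : 0 < |t| := by linarith
  have h2t : 0 < 2 * |t| := by linarith
  obtain ⟨m, hm, hm1, hm2⟩ := exists_first_passage hκ ha (n₀ := n₀) (fun n hn => by
    rw [hstep n]
    exact mul_le_mul_of_nonneg_right (by linarith [(hn₀ n hn).2.1]) (hn₀ n hn).1.le) htn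
  have he : |evalLF (L m) ξ| = Real.exp (-a m) := by
    simp only [ha_def]; rw [neg_neg, Real.exp_log (hepos m)]
  have hupper : |t| * |evalLF (L m) ξ| < 1 / 2 := by
    have : |evalLF (L m) ξ| < (2 * |t|)⁻¹ := by
      rw [he, ← Real.exp_log (inv_pos.mpr h2t), Real.exp_lt_exp, Real.log_inv]; linarith
    calc |t| * |evalLF (L m) ξ| < |t| * (2 * |t|)⁻¹ := mul_lt_mul_of_pos_left this ht0
      _ = 1 / 2 := by field_simp
  have hlower : 1 / 2 * (2 * |t|) ^ (-κ) ≤ |t| * |evalLF (L m) ξ| := by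
    have : (2 * |t|) ^ (-κ) * (2 * |t|)⁻¹ ≤ |evalLF (L m) ξ| := by
      rw [← Real.rpow_neg_one, ← Real.rpow_add h2t, Real.rpow_def_of_pos h2t, he,
        Real.exp_le_exp]
      linarith
    calc 1 / 2 * (2 * |t|) ^ (-κ) = |t| * ((2 * |t|) ^ (-κ) * (2 * |t|)⁻¹) := by field_simp
      _ ≤ _ := mul_le_mul_of_nonneg_left this ht0.le
  have hH1 := one_le_height (hne m)
  have hH : heightLF (L m) ≤ (2 * |t|) ^ ((1 + κ) / σ) := by
    have hl : 0 ≤ Real.log (heightLF (L m)) := Real.log_nonneg hH1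
    have h1 : σ * Real.log (heightLF (L m)) ≤ a m :=
      (mul_le_mul_of_nonneg_right (by linarith [(hn₀ m hm).2.2]) hl).trans (hheight m)
    rw [Real.rpow_def_of_pos h2t, ← Real.log_le_iff_le_exp (by linarith), ← mul_div_assoc,
      le_div_iff₀ hσ]
    linarith
  have herr : heightLF (L m) * ((r + 1 : ℕ) * (K * |t| ^ (-(1 / (s : ℝ)))))
      < 1 / 2 * (2 * |t|) ^ (-κ) :=
    (mul_le_mul_of_nonneg_right hH (by positivity)).trans_lt hterr
  exact absurd (eval_le_error (L m) ξ x t _ hx hupper (herr.trans_le (hlower.trans hupper.le)))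
    (not_le.mpr (herr.trans_le hlower))
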